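/- (Stable sets for the convex model I_1.) For each t ∈ [0,T], the stable set S_1(t) := { z ∈ L¹(Ω) : I_1(t,z) ≤ I_1(t,ẑ) + c_D‖ẑ − z‖_{L¹} for all ẑ ∈ L¹(Ω) } admits the pointwise characterization S_1(t) = { z ∈ L¹(Ω) : |z(x)|^{β−2} z(x) ∈ [ (g(t,x) − c_D)/(α(x)β), (g(t,x) + c_D)/(α(x)β) ] for almost every x ∈ Ω }, where |z(x)|^{β−2} z(x) is interpreted as 0 when z(x) = 0. In particular, S_1(t) is convex and norm-closed in L¹(Ω), hence sequentially weakly closed. -/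

import Mathlib

open Filter Topology Set MeasureTheory
open scoped ENNReal Classical

noncomputable section

/-- Weak convergence of a sequence in a normed space: convergence against every
continuous linear functional. -/
def WeakConv {X : Type*} [NormedAddCommGroup X] [NormedSpace ℝ X]
    (u : ℕ → X) (z : X) : Prop :=
  ∀ f : X →L[ℝ] ℝ, Tendsto (fun n => f (u n)) atTop (𝓝 (f z))

/-- A set is sequentially weakly compact if every sequence in it has a subsequence
converging weakly to a point of the set. -/
def SeqWeaklyCompact {X : Type*} [NormedAddCommGroup X] [NormedSpace ℝ X]
    (S : Set X) : Prop :=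
  ∀ u : ℕ → X, (∀ n, u n ∈ S) →
    ∃ z ∈ S, ∃ φ : ℕ → ℕ, StrictMono φ ∧ WeakConv (fun n => u (φ n)) z

/-- The dissipation of the curve `z` on the interval `[s,t]`. -/
def Diss {X : Type*} (D : X → X → ℝ≥0∞) (z : ℝ → X) (s t : ℝ) : ℝ≥0∞ :=
  ⨆ (N : ℕ) (τ : ℕ → ℝ) (_ : τ 0 = s) (_ : τ N = t)
    (_ : ∀ j < N, τ j < τ (j + 1)),
    ∑ j ∈ Finset.range N, D (z (τ j)) (z (τ (j + 1)))

/-- The convex model energy functional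
`I₁(t,z) = ∫_Ω (α(x)|z(x)|^β − g(t,x) z(x)) dx + γ`, with value `+∞` when
`∫_Ω α|z|^β dx` is infinite. -/
def I1 {d : ℕ} (Ω : Set (EuclideanSpace ℝ (Fin d)))
    (αf : EuclideanSpace ℝ (Fin d) → ℝ) (β : ℝ)
    (g : ℝ → Lp ℝ ⊤ (volume.restrict Ω)) (γ : ℝ)
    (t : ℝ) (z : Lp ℝ 1 (volume.restrict Ω)) : ℝ≥0∞ :=
  if Integrable (fun x => αf x * |z x| ^ β) (volume.restrict Ω) then
    ENNReal.ofReal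
      ((∫ x, (αf x * |z x| ^ β - g t x * z x) ∂(volume.restrict Ω)) + γ)
  else ⊤

/-!
Stability in `L¹` localizes. Testing with the competitors `z + s 1_B`, whose energy and distance to
`z` differ from those of `z` only through integrals over `B`, shows that almost every value `z x` is
stable under the increment `s` for the energy density at `x`; letting `s` run through a countable
dense set and using continuity of the density gives stability against all values. Conversely,
pointwise stability integrates. For a convex differentiable density, stability with dissipation rate
`c` means that its derivative, here `α β |y| ^ (β - 2) y - g`, is bounded by `c` in absolute value.
Since `y ↦ |y| ^ (β - 2) y` is monotone and continuous, this confines each value `z x` to a closed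
interval, so the stable set is convex and closed, and the Hahn–Banach separation theorem gives
sequential weak closedness.
-/

section Pointwise

variable {F : Type*} [NormedAddCommGroup F]

/-- Stability of a point `y` for an energy `f` when moving from `y` to `w` dissipates
`c * ‖w - y‖`. -/
def IsStableAt (f : F → ℝ) (c : ℝ) (y : F) : Prop :=
  ∀ w, f y ≤ f w + c * ‖w - y‖

lemma isStableAt_of_denseRange {ι : Type*} {v : ι → F} (hv : DenseRange v) {f : F → ℝ}
    (hf : Continuous f) {c : ℝ} {y : F} (h : ∀ i, f y ≤ f (y + v i) + c * ‖v i‖) :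
    IsStableAt f c y := by
  intro w
  have hclosed : IsClosed {s | f y ≤ f (y + s) + c * ‖s‖} :=
    isClosed_le continuous_const (by fun_prop)
  simpa using hv.induction_on (p := fun s => f y ≤ f (y + s) + c * ‖s‖) (w - y) hclosed h

lemma add_deriv_mul_sub_le_of_convexOn {S : Set ℝ} {f : ℝ → ℝ} (hf : ConvexOn ℝ S f)
    {f' y w : ℝ} (hy : y ∈ S) (hw : w ∈ S) (hf' : HasDerivAt f f' y) :
    f y + f' * (w - y) ≤ f w := by
  rcases lt_trichotomy y w with hyw | rfl | hwy
  · have hslope := hf.le_slope_of_hasDerivAt hy hw hyw hf'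
    rw [slope_def_field, le_div_iff₀ (sub_pos.2 hyw)] at hslope
    linarith
  · simp
  · have hslope := hf.slope_le_of_hasDerivAt hw hy hwy hf'
    rw [slope_def_field, div_le_iff₀ (sub_pos.2 hwy)] at hslope
    linarith

lemma isStableAt_iff_abs_deriv_le {f : ℝ → ℝ} (hf : ConvexOn ℝ univ f) {f' c y : ℝ}
    (hf' : HasDerivAt f f' y) : IsStableAt f c y ↔ |f'| ≤ c := by
  refine ⟨fun h => abs_le.2 ⟨?_, ?_⟩, fun h w => ?_⟩
  · refine ge_of_tendsto (b := -c) (hf'.tendsto_slope.mono_left (nhdsGT_le_nhdsNE y)) ?_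
    filter_upwards [self_mem_nhdsWithin] with w (hw : y < w)
    have hyw := h w
    rw [Real.norm_of_nonneg (sub_pos.2 hw).le] at hyw
    rw [slope_def_field, le_div_iff₀ (sub_pos.2 hw)]
    linarith
  · refine le_of_tendsto (hf'.tendsto_slope.mono_left (nhdsLT_le_nhdsNE y)) ?_
    filter_upwards [self_mem_nhdsWithin] with w (hw : w < y)
    have hyw := h w
    rw [Real.norm_of_nonpos (sub_neg.2 hw).le] at hyw
    rw [slope_def_field, div_le_iff_of_neg (sub_neg.2 hw)]
    linarith
  · have htangent := add_deriv_mul_sub_le_of_convexOn hf (mem_univ y) (mem_univ w) hf'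
    have hslope : |f' * (w - y)| ≤ c * ‖w - y‖ := by
      rw [abs_mul, Real.norm_eq_abs]
      gcongr
    linarith [neg_le_of_abs_le hslope]

end Pointwise

section PowerDensity

variable {p : ℝ}

lemma convexOn_norm_rpow {F : Type*} [SeminormedAddCommGroup F] [NormedSpace ℝ F] (hp : 1 ≤ p) :
    ConvexOn ℝ univ fun y : F => ‖y‖ ^ p :=
  ⟨convex_univ, fun x _ y _ θ η hθ hη hsum => calc
    ‖θ • x + η • y‖ ^ p ≤ (θ • ‖x‖ + η • ‖y‖) ^ p := by
      gcongr
      exact (convexOn_norm convex_univ).2 trivial trivial hθ hη hsum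
    _ ≤ θ • ‖x‖ ^ p + η • ‖y‖ ^ p :=
      (convexOn_rpow hp).2 (norm_nonneg x) (norm_nonneg y) hθ hη hsum⟩

lemma norm_add_rpow_le {F : Type*} [SeminormedAddCommGroup F] (hp : 1 ≤ p) (x y : F) :
    ‖x + y‖ ^ p ≤ 2 ^ (p - 1) * (‖x‖ ^ p + ‖y‖ ^ p) := by
  have h : ‖x + y‖₊ ^ p ≤ 2 ^ (p - 1) * (‖x‖₊ ^ p + ‖y‖₊ ^ p) :=
    (NNReal.rpow_le_rpow (nnnorm_add_le x y) (by positivity)).trans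
      (NNReal.rpow_add_le_mul_rpow_add_rpow _ _ hp)
  exact_mod_cast h

lemma abs_rpow_sub_two_mul_eq_deriv (hp : 1 < p) :
    (fun y : ℝ => |y| ^ (p - 2) * y) = fun y => p⁻¹ * deriv (fun y : ℝ => |y| ^ p) y := by
  ext y
  rw [(hasDerivAt_abs_rpow y hp).deriv]
  field_simp

lemma continuous_abs_rpow_sub_two_mul (hp : 1 < p) :
    Continuous fun y : ℝ => |y| ^ (p - 2) * y := by
  rw [abs_rpow_sub_two_mul_eq_deriv hp]
  exact ((contDiff_norm_rpow hp).continuous_deriv le_rfl).const_mul p⁻¹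

lemma monotone_abs_rpow_sub_two_mul (hp : 1 < p) :
    Monotone fun y : ℝ => |y| ^ (p - 2) * y := by
  rw [abs_rpow_sub_two_mul_eq_deriv hp]
  have hmono : Monotone (deriv fun y : ℝ => |y| ^ p) := monotoneOn_univ.1 <|
    (convexOn_norm_rpow hp.le).monotoneOn_deriv fun y _ =>
      (hasDerivAt_abs_rpow y hp).differentiableAt
  exact hmono.const_mul (by positivity)

/-- The energy density `a |y| ^ p - b y` of the convex model at one point of the domain. -/
def powerDensity (p a b y : ℝ) : ℝ :=
  a * |y| ^ p - b * y

lemma powerDensity_zero (hp : p ≠ 0) (a b : ℝ) : powerDensity p a b 0 = 0 := by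
  simp [powerDensity, Real.zero_rpow hp]

lemma continuous_powerDensity (hp : 0 ≤ p) (a b : ℝ) : Continuous (powerDensity p a b) :=
  ((continuous_abs.rpow_const fun _ => Or.inr hp).const_mul a).sub (continuous_id.const_mul b)

lemma convexOn_powerDensity (hp : 1 ≤ p) {a : ℝ} (ha : 0 ≤ a) (b : ℝ) :
    ConvexOn ℝ univ (powerDensity p a b) :=
  ((convexOn_norm_rpow hp).smul ha).sub ((LinearMap.mul ℝ ℝ b).concaveOn convex_univ)

lemma hasDerivAt_powerDensity (hp : 1 < p) (a b y : ℝ) :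
    HasDerivAt (powerDensity p a b) (|y| ^ (p - 2) * y * (a * p) - b) y :=
  (((hasDerivAt_abs_rpow y hp).const_mul a).sub ((hasDerivAt_id y).const_mul b)).congr_deriv
    (by ring)

lemma isStableAt_powerDensity_iff (hp : 1 < p) {a : ℝ} (ha : 0 < a) {b c y : ℝ} :
    IsStableAt (powerDensity p a b) c y ↔
      |y| ^ (p - 2) * y ∈ Icc ((b - c) / (a * p)) ((b + c) / (a * p)) := by
  have hap : 0 < a * p := by positivity
  rw [isStableAt_iff_abs_deriv_le (convexOn_powerDensity hp.le ha.le b)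
    (hasDerivAt_powerDensity hp a b y), mem_Icc, div_le_iff₀ hap, le_div_iff₀ hap,
    abs_sub_le_iff, sub_le_iff_le_add', sub_le_comm, and_comm]

end PowerDensity

section Localization

variable {E F : Type*} [MeasurableSpace E] {μ : Measure E} [NormedAddCommGroup F]

lemma convex_setOf_ae_mem [NormedSpace ℝ F] {q : ℝ≥0∞} {K : E → Set F}
    (hK : ∀ x, Convex ℝ (K x)) : Convex ℝ {z : Lp F q μ | ∀ᵐ x ∂μ, z x ∈ K x} := by
  intro z hz w hw θ η hθ hη hsum
  filter_upwards [hz, hw, Lp.coeFn_add (θ • z) (η • w), Lp.coeFn_smul θ z, Lp.coeFn_smul η w]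
    with x hzx hwx hadd hsmulz hsmulw
  rw [hadd, Pi.add_apply, hsmulz, hsmulw]
  exact hK x hzx hwx hθ hη hsum

lemma isClosed_setOf_ae_mem {q : ℝ≥0∞} [Fact (1 ≤ q)] {K : E → Set F}
    (hK : ∀ x, IsClosed (K x)) : IsClosed {z : Lp F q μ | ∀ᵐ x ∂μ, z x ∈ K x} := by
  refine IsSeqClosed.isClosed fun u z hu huz => ?_
  obtain ⟨φ, -, hφ⟩ := (tendstoInMeasure_of_tendsto_Lp huz).exists_seq_tendsto_ae
  filter_upwards [hφ, ae_all_iff.2 hu] with x hx hux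
  exact (hK x).mem_of_tendsto hx (Eventually.of_forall fun n => hux (φ n))

/-- Stability of `z` for the integral functional with integrand `f` and the `L¹` dissipation
distance. Integrability expresses that the energy of `z` is finite, and only competitors of finite
energy are admitted. -/
def IsIntegralStable (μ : Measure E) (f : E → F → ℝ) (c : ℝ) (z : Lp F 1 μ) : Prop :=
  Integrable (fun x => f x (z x)) μ ∧
    ∀ w : Lp F 1 μ, Integrable (fun x => f x (w x)) μ →
      ∫ x, f x (z x) ∂μ ≤ ∫ x, f x (w x) ∂μ + c * ‖w - z‖

lemma isIntegralStable_of_ae_isStableAt {f : E → F → ℝ} {c : ℝ} {z : Lp F 1 μ}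
    (hz : Integrable (fun x => f x (z x)) μ) (h : ∀ᵐ x ∂μ, IsStableAt (f x) c (z x)) :
    IsIntegralStable μ f c z := by
  refine ⟨hz, fun w hw => ?_⟩
  have hdist : Integrable (fun x => c * ‖(w - z) x‖) μ :=
    (L1.integrable_coeFn (w - z)).norm.const_mul c
  calc ∫ x, f x (z x) ∂μ ≤ ∫ x, (f x (w x) + c * ‖(w - z) x‖) ∂μ := by
        refine integral_mono_ae hz (hw.add hdist) ?_
        filter_upwards [h, Lp.coeFn_sub w z] with x hx hsub
        rw [hsub]
        exact hx (w x)
    _ = ∫ x, f x (w x) ∂μ + c * ‖w - z‖ := by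
        rw [integral_add hw hdist, integral_const_mul, ← L1.norm_eq_integral_norm]

lemma comp_add_indicatorConstLp_ae_eq {G : Type*} {q : ℝ≥0∞} (f : E → F → G) (z : Lp F q μ)
    {B : Set E} (hB : MeasurableSet B) (hμB : μ B ≠ ∞) (s : F) :
    (fun x => f x ((z + indicatorConstLp q hB hμB s) x)) =ᵐ[μ]
      B.piecewise (fun x => f x (z x + s)) (fun x => f x (z x)) := by
  filter_upwards [Lp.coeFn_add z (indicatorConstLp q hB hμB s),
    indicatorConstLp_coeFn (p := q) (hs := hB) (hμs := hμB) (c := s)] with x hadd hind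
  rw [hadd, Pi.add_apply, hind]
  by_cases hx : x ∈ B <;> simp [hx]

lemma IsIntegralStable.setIntegral_le {f : E → F → ℝ} {c : ℝ} {z : Lp F 1 μ}
    (h : IsIntegralStable μ f c z) {B : Set E} (hB : MeasurableSet B) (hμB : μ B ≠ ∞) {s : F}
    (hs : IntegrableOn (fun x => f x (z x + s)) B μ) :
    ∫ x in B, f x (z x) ∂μ ≤ ∫ x in B, f x (z x + s) ∂μ + c * (‖s‖ * μ.real B) := by
  have hzB : IntegrableOn (fun x => f x (z x)) Bᶜ μ := h.1.integrableOn
  have hcomp := comp_add_indicatorConstLp_ae_eq f z hB hμB s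
  have hstable := h.2 (z + indicatorConstLp 1 hB hμB s)
    ((Integrable.piecewise hB hs hzB).congr hcomp.symm)
  rw [integral_congr_ae hcomp, integral_piecewise hB hs hzB, add_sub_cancel_left,
    norm_indicatorConstLp one_ne_zero ENNReal.one_ne_top, ENNReal.toReal_one, div_one,
    Real.rpow_one, ← integral_add_compl hB h.1] at hstable
  linarith

lemma IsIntegralStable.ae_restrict_le [SigmaFinite μ] {f : E → F → ℝ} {c : ℝ} {z : Lp F 1 μ}
    (h : IsIntegralStable μ f c z) {L : Set E} (hL : MeasurableSet L) {s : F}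
    (hs : ∀ B ⊆ L, MeasurableSet B → μ B < ∞ → IntegrableOn (fun x => f x (z x + s)) B μ) :
    ∀ᵐ x ∂μ.restrict L, f x (z x) ≤ f x (z x + s) + c * ‖s‖ := by
  have hfinite {B : Set E} (hB : MeasurableSet B) (hμB : μ.restrict L B < ∞) : μ (B ∩ L) < ∞ := by
    rwa [← Measure.restrict_apply hB]
  have hshift {B : Set E} (hB : MeasurableSet B) (hμB : μ.restrict L B < ∞) :
      IntegrableOn (fun x => f x (z x + s)) (B ∩ L) μ :=
    hs _ inter_subset_right (hB.inter hL) (hfinite hB hμB)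
  have hconst {B : Set E} (hB : MeasurableSet B) (hμB : μ.restrict L B < ∞) :
      IntegrableOn (fun _ => c * ‖s‖) (B ∩ L) μ :=
    integrableOn_const (hfinite hB hμB).ne
  have hsum {B : Set E} (hB : MeasurableSet B) (hμB : μ.restrict L B < ∞) :
      IntegrableOn (fun x => f x (z x + s) + c * ‖s‖) (B ∩ L) μ :=
    (hshift hB hμB).add (hconst hB hμB)
  have hnonneg : 0 ≤ᵐ[μ.restrict L] fun x => f x (z x + s) + c * ‖s‖ - f x (z x) := by
    refine ae_nonneg_of_forall_setIntegral_nonneg_of_sigmaFinite (fun B hB hμB => ?_)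
      fun B hB hμB => ?_
    · rw [IntegrableOn, Measure.restrict_restrict hB]
      exact (hsum hB hμB).sub h.1.integrableOn
    · have hle := h.setIntegral_le (hB.inter hL) (hfinite hB hμB).ne (hshift hB hμB)
      rw [Measure.restrict_restrict hB, integral_sub (hsum hB hμB) h.1.integrableOn,
        integral_add (hshift hB hμB) (hconst hB hμB), setIntegral_const, smul_eq_mul]
      linarith
  exact hnonneg.mono fun x hx => sub_nonneg.1 hx

lemma IsIntegralStable.ae_isStableAt [SigmaFinite μ] [TopologicalSpace.SeparableSpace F]
    {f : E → F → ℝ} {c : ℝ} {z : Lp F 1 μ} (h : IsIntegralStable μ f c z)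
    (hf : ∀ x, Continuous (f x))
    {L : ℕ → Set E} (hL : ∀ n, MeasurableSet (L n)) (hLuniv : ⋃ n, L n = univ)
    (hs : ∀ n, ∀ B ⊆ L n, MeasurableSet B → μ B < ∞ →
      ∀ s, IntegrableOn (fun x => f x (z x + s)) B μ) :
    ∀ᵐ x ∂μ, IsStableAt (f x) c (z x) := by
  have hincr (s : F) : ∀ᵐ x ∂μ, f x (z x) ≤ f x (z x + s) + c * ‖s‖ := by
    have hunion := (ae_restrict_iUnion_iff L _).2 fun n =>
      h.ae_restrict_le (hL n) fun B hBL hB hμB => hs n B hBL hB hμB s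
    rwa [hLuniv, Measure.restrict_univ] at hunion
  filter_upwards [ae_all_iff.2 fun i => hincr (TopologicalSpace.denseSeq F i)] with x hx
  exact isStableAt_of_denseRange (TopologicalSpace.denseRange_denseSeq F) (hf x) hx

end Localization

section PowerEnergy

variable {E : Type*} [MeasurableSpace E] {μ : Measure E} {p c γ : ℝ} {a b : E → ℝ}
  {z : Lp ℝ 1 μ}

/-- The stable set of an extended-valued energy `I` for the dissipation distance
`c * ‖w - z‖`. -/
def stableSet {X : Type*} [NormedAddCommGroup X] (I : X → ℝ≥0∞) (c : ℝ) : Set X :=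
  {z | ∀ w, I z ≤ I w + ENNReal.ofReal (c * ‖w - z‖)}

/-- The energy `I1` at a fixed time, over an arbitrary measure space and with the force `b`.
As in `I1`, `ENNReal.ofReal` replaces negative values of the integral plus `γ` by `0`. -/
def powerEnergy (μ : Measure E) (p : ℝ) (a b : E → ℝ) (γ : ℝ) (z : Lp ℝ 1 μ) : ℝ≥0∞ :=
  if Integrable (fun x => a x * |z x| ^ p) μ then
    ENNReal.ofReal (∫ x, powerDensity p (a x) (b x) (z x) ∂μ + γ)
  else ⊤

lemma integrable_powerDensity_iff (hb : MemLp b ⊤ μ) :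
    Integrable (fun x => powerDensity p (a x) (b x) (z x)) μ ↔
      Integrable (fun x => a x * |z x| ^ p) μ := by
  have hbz : Integrable (fun x => b x * z x) μ := hb.integrable_mul (Lp.memLp z)
  exact ⟨fun h => (h.add hbz).congr (.of_forall fun x => sub_add_cancel _ _), fun h => h.sub hbz⟩

lemma integrable_powerDensity_zero (hp : p ≠ 0) :
    Integrable (fun x => powerDensity p (a x) (b x) ((0 : Lp ℝ 1 μ) x)) μ := by
  refine (integrable_zero E ℝ μ).congr ?_
  filter_upwards [Lp.coeFn_zero ℝ 1 μ] with x hx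
  rw [hx, Pi.zero_apply, powerDensity_zero hp]

lemma integrable_powerDensity_of_ae_isStableAt (hp : p ≠ 0) (ha : AEMeasurable a μ)
    (ha0 : ∀ᵐ x ∂μ, 0 ≤ a x) (hb : MemLp b ⊤ μ)
    (h : ∀ᵐ x ∂μ, IsStableAt (powerDensity p (a x) (b x)) c (z x)) :
    Integrable (fun x => powerDensity p (a x) (b x) (z x)) μ := by
  have hbound : Integrable (fun x => b x * z x + c * ‖z x‖) μ :=
    (hb.integrable_mul (Lp.memLp z)).add ((L1.integrable_coeFn z).norm.const_mul c)
  have hmeas : AEMeasurable (fun x => a x * |z x| ^ p) μ :=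
    ha.mul ((Lp.aestronglyMeasurable z).aemeasurable.abs.pow_const p)
  refine (integrable_powerDensity_iff hb).2 (hbound.mono' hmeas.aestronglyMeasurable ?_)
  filter_upwards [ha0, h] with x hax hx
  have hzero := hx 0
  rw [powerDensity_zero hp, zero_sub, norm_neg, powerDensity] at hzero
  rw [Real.norm_of_nonneg (by positivity)]
  linarith

lemma integrableOn_powerDensity_add (hp : 1 ≤ p) (ha : AEMeasurable a μ)
    (ha0 : ∀ᵐ x ∂μ, 0 ≤ a x) (hb : MemLp b ⊤ μ)
    (hz : Integrable (fun x => powerDensity p (a x) (b x) (z x)) μ)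
    {B : Set E} (hμB : μ B < ∞) (haB : IntegrableOn a B μ) (s : ℝ) :
    IntegrableOn (fun x => powerDensity p (a x) (b x) (z x + s)) B μ := by
  have hlin : IntegrableOn (fun x => b x * (z x + s)) B μ :=
    (hb.restrict B).integrable_mul <| memLp_one_iff_integrable.2 <|
      (L1.integrable_coeFn z).integrableOn.add (integrableOn_const hμB.ne)
  have hbound : IntegrableOn
      (fun x => 2 ^ (p - 1) * (a x * |z x| ^ p + a x * |s| ^ p)) B μ :=
    (((integrable_powerDensity_iff hb).1 hz).integrableOn.add (haB.mul_const _)).const_mul _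
  have hmeas : AEMeasurable (fun x => a x * |z x + s| ^ p) μ :=
    ha.mul (((Lp.aestronglyMeasurable z).aemeasurable.add_const s).abs.pow_const p)
  refine Integrable.sub (hbound.mono' hmeas.restrict.aestronglyMeasurable ?_) hlin
  filter_upwards [ae_restrict_of_ae ha0] with x hax
  rw [Real.norm_of_nonneg (by positivity)]
  calc a x * |z x + s| ^ p ≤ a x * (2 ^ (p - 1) * (|z x| ^ p + |s| ^ p)) :=
        mul_le_mul_of_nonneg_left (norm_add_rpow_le hp (z x) s) hax
    _ = 2 ^ (p - 1) * (a x * |z x| ^ p + a x * |s| ^ p) := by ring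

lemma ae_isStableAt_powerDensity [SigmaFinite μ] (hp : 1 ≤ p) (ha : AEMeasurable a μ)
    (ha0 : ∀ᵐ x ∂μ, 0 ≤ a x) (hb : MemLp b ⊤ μ)
    (h : IsIntegralStable μ (fun x => powerDensity p (a x) (b x)) c z) :
    ∀ᵐ x ∂μ, IsStableAt (powerDensity p (a x) (b x)) c (z x) := by
  -- The weight need not be locally integrable, so competitors are localized to its sublevel sets.
  have hcover : ⋃ n : ℕ, {x | ‖ha.mk a x‖ ≤ n} = univ :=
    iUnion_eq_univ_iff.2 fun x => exists_nat_ge ‖ha.mk a x‖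
  refine h.ae_isStableAt (fun x => continuous_powerDensity (by positivity) _ _)
    (fun n => measurableSet_le ha.measurable_mk.norm measurable_const) hcover
    fun n B hBn hB hμB => integrableOn_powerDensity_add hp ha ha0 hb h.1 hμB ?_
  have hmk : IntegrableOn (ha.mk a) B μ :=
    Measure.integrableOn_of_bounded hμB.ne ha.measurable_mk.aestronglyMeasurable
      ((ae_restrict_mem hB).mono fun x hx => hBn hx)
  exact hmk.congr (ae_restrict_of_ae ha.ae_eq_mk.symm)

lemma mem_stableSet_powerEnergy_iff (hp : p ≠ 0) (hb : MemLp b ⊤ μ) (hc : 0 ≤ c)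
    (hγ : ∀ w : Lp ℝ 1 μ, Integrable (fun x => a x * |w x| ^ p) μ →
      0 ≤ ∫ x, powerDensity p (a x) (b x) (w x) ∂μ + γ) :
    z ∈ stableSet (powerEnergy μ p a b γ) c ↔
      IsIntegralStable μ (fun x => powerDensity p (a x) (b x)) c z := by
  have hstable_iff {w : Lp ℝ 1 μ} (hz : Integrable (fun x => a x * |z x| ^ p) μ)
      (hw : Integrable (fun x => a x * |w x| ^ p) μ) :
      powerEnergy μ p a b γ z ≤ powerEnergy μ p a b γ w + ENNReal.ofReal (c * ‖w - z‖) ↔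
        ∫ x, powerDensity p (a x) (b x) (z x) ∂μ ≤
          ∫ x, powerDensity p (a x) (b x) (w x) ∂μ + c * ‖w - z‖ := by
    have hdiss : 0 ≤ c * ‖w - z‖ := by positivity
    rw [powerEnergy, if_pos hz, powerEnergy, if_pos hw, ← ENNReal.ofReal_add (hγ w hw) hdiss,
      ENNReal.ofReal_le_ofReal_iff (add_nonneg (hγ w hw) hdiss), add_right_comm,
      add_le_add_iff_right]
  simp only [IsIntegralStable, integrable_powerDensity_iff hb]
  refine ⟨fun h => ?_, fun ⟨hz, h⟩ w => ?_⟩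
  · have hz : Integrable (fun x => a x * |z x| ^ p) μ := by
      by_contra hz
      have hzero := (integrable_powerDensity_iff hb).1 (integrable_powerDensity_zero (a := a) hp)
      have hle := h 0
      rw [powerEnergy, if_neg hz, powerEnergy, if_pos hzero, top_le_iff] at hle
      exact ENNReal.add_ne_top.2 ⟨ENNReal.ofReal_ne_top, ENNReal.ofReal_ne_top⟩ hle
    exact ⟨hz, fun w hw => (hstable_iff hz hw).1 (h w)⟩
  · by_cases hw : Integrable (fun x => a x * |w x| ^ p) μ
    · exact (hstable_iff hz hw).2 (h w hw)
    · simp [powerEnergy, hw]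

theorem stableSet_powerEnergy_eq [SigmaFinite μ] (ha : AEMeasurable a μ)
    (ha0 : ∀ᵐ x ∂μ, 0 < a x) (hb : MemLp b ⊤ μ) (hp : 1 < p) (hc : 0 ≤ c)
    (hγ : ∀ w : Lp ℝ 1 μ, Integrable (fun x => a x * |w x| ^ p) μ →
      0 ≤ ∫ x, powerDensity p (a x) (b x) (w x) ∂μ + γ) :
    stableSet (powerEnergy μ p a b γ) c =
      {z | ∀ᵐ x ∂μ, |z x| ^ (p - 2) * z x ∈
        Icc ((b x - c) / (a x * p)) ((b x + c) / (a x * p))} := by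
  have hp0 : p ≠ 0 := by positivity
  have ha0' : ∀ᵐ x ∂μ, 0 ≤ a x := ha0.mono fun _ => le_of_lt
  ext z
  have hpointwise : (∀ᵐ x ∂μ, IsStableAt (powerDensity p (a x) (b x)) c (z x)) ↔
      ∀ᵐ x ∂μ, |z x| ^ (p - 2) * z x ∈
        Icc ((b x - c) / (a x * p)) ((b x + c) / (a x * p)) :=
    eventually_congr (ha0.mono fun x hx => isStableAt_powerDensity_iff hp hx)
  rw [mem_ofPred_eq, ← hpointwise, mem_stableSet_powerEnergy_iff hp0 hb hc hγ]
  exact ⟨ae_isStableAt_powerDensity hp.le ha ha0' hb, fun h =>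
    isIntegralStable_of_ae_isStableAt (integrable_powerDensity_of_ae_isStableAt hp0 ha ha0' hb h) h⟩

lemma convex_setOf_ae_abs_rpow_sub_two_mul_mem_Icc (hp : 1 < p) (l r : E → ℝ) :
    Convex ℝ {z : Lp ℝ 1 μ | ∀ᵐ x ∂μ, |z x| ^ (p - 2) * z x ∈ Icc (l x) (r x)} :=
  convex_setOf_ae_mem (K := fun x => (fun y : ℝ => |y| ^ (p - 2) * y) ⁻¹' Icc (l x) (r x))
    fun _ => (ordConnected_Icc.preimage_mono (monotone_abs_rpow_sub_two_mul hp)).convex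

lemma isClosed_setOf_ae_abs_rpow_sub_two_mul_mem_Icc (hp : 1 < p) (l r : E → ℝ) :
    IsClosed {z : Lp ℝ 1 μ | ∀ᵐ x ∂μ, |z x| ^ (p - 2) * z x ∈ Icc (l x) (r x)} :=
  isClosed_setOf_ae_mem (K := fun x => (fun y : ℝ => |y| ^ (p - 2) * y) ⁻¹' Icc (l x) (r x))
    fun _ => isClosed_Icc.preimage (continuous_abs_rpow_sub_two_mul hp)

end PowerEnergy

lemma WeakConv.mem_of_convex_of_isClosed {X : Type*} [NormedAddCommGroup X] [NormedSpace ℝ X]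
    {S : Set X} {u : ℕ → X} {z : X} (huz : WeakConv u z) (hconv : Convex ℝ S)
    (hclosed : IsClosed S) (hu : ∀ n, u n ∈ S) : z ∈ S := by
  by_contra hz
  obtain ⟨f, r, hfz, hfS⟩ := geometric_hahn_banach_point_closed hconv hclosed hz
  exact hfz.not_ge (ge_of_tendsto' (huz f) fun n => (hfS _ (hu n)).le)

theorem I1_stable_set_characterization_general {E : Type*} [MeasurableSpace E] {μ : Measure E}
    [SigmaFinite μ] {a b : E → ℝ} (ha : AEMeasurable a μ) (ha0 : ∀ᵐ x ∂μ, 0 < a x)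
    (hb : MemLp b ⊤ μ) {p c γ : ℝ} (hp : 1 < p) (hc : 0 ≤ c)
    (hγ : ∀ w : Lp ℝ 1 μ, Integrable (fun x => a x * |w x| ^ p) μ →
      0 ≤ ∫ x, powerDensity p (a x) (b x) (w x) ∂μ + γ) :
    stableSet (powerEnergy μ p a b γ) c =
      {z | ∀ᵐ x ∂μ, |z x| ^ (p - 2) * z x ∈
        Icc ((b x - c) / (a x * p)) ((b x + c) / (a x * p))} ∧
    Convex ℝ (stableSet (powerEnergy μ p a b γ) c) ∧
    IsClosed (stableSet (powerEnergy μ p a b γ) c) ∧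
    ∀ (u : ℕ → Lp ℝ 1 μ) (z : Lp ℝ 1 μ),
      (∀ n, u n ∈ stableSet (powerEnergy μ p a b γ) c) → WeakConv u z →
        z ∈ stableSet (powerEnergy μ p a b γ) c := by
  have heq := stableSet_powerEnergy_eq ha ha0 hb hp hc hγ
  have hconvex : Convex ℝ (stableSet (powerEnergy μ p a b γ) c) :=
    heq ▸ convex_setOf_ae_abs_rpow_sub_two_mul_mem_Icc hp _ _
  have hclosed : IsClosed (stableSet (powerEnergy μ p a b γ) c) :=
    heq ▸ isClosed_setOf_ae_abs_rpow_sub_two_mul_mem_Icc hp _ _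
  exact ⟨heq, hconvex, hclosed, fun _ _ hu huz => huz.mem_of_convex_of_isClosed hconvex hclosed hu⟩

/-- The stable sets of the convex model `I₁` admit the pointwise characterization
`S₁(t) = { z : |z(x)|^(β−2) z(x) ∈ [(g(t,x)−c_D)/(α(x)β), (g(t,x)+c_D)/(α(x)β)] a.e. }`;
in particular they are convex, norm-closed and hence sequentially weakly closed. -/
theorem I1_stable_set_characterization
    {d : ℕ} (Ω : Set (EuclideanSpace ℝ (Fin d)))
    (hΩmeas : MeasurableSet Ω) (hΩbdd : Bornology.IsBounded Ω)
    (hΩpos : 0 < volume Ω)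
    (T cD : ℝ) (hT : 0 < T) (hcD : 0 < cD)
    (αf : EuclideanSpace ℝ (Fin d) → ℝ) (hαmeas : Measurable αf)
    (α0 : ℝ) (hα0 : 0 < α0) (hαlb : ∀ x ∈ Ω, α0 ≤ αf x)
    (β : ℝ) (hβ : 1 < β)
    (g : ℝ → Lp ℝ ⊤ (volume.restrict Ω))
    (hg : ContDiffOn ℝ 1 g (Icc (0:ℝ) T))
    (γ : ℝ)
    -- `γ` is chosen so that `I₁` is nonnegative:
    (hnonneg : ∀ t ∈ Icc (0:ℝ) T, ∀ z : Lp ℝ 1 (volume.restrict Ω),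
      Integrable (fun x => αf x * |z x| ^ β) (volume.restrict Ω) →
      0 ≤ (∫ x, (αf x * |z x| ^ β - g t x * z x) ∂(volume.restrict Ω)) + γ)
    (t : ℝ) (ht : t ∈ Icc (0:ℝ) T) :
    {z : Lp ℝ 1 (volume.restrict Ω) |
        ∀ w : Lp ℝ 1 (volume.restrict Ω),
          I1 Ω αf β g γ t z ≤ I1 Ω αf β g γ t w + ENNReal.ofReal (cD * ‖w - z‖)}
      = {z : Lp ℝ 1 (volume.restrict Ω) |
        ∀ᵐ x ∂(volume.restrict Ω),
          |z x| ^ (β - 2) * z x ∈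
            Icc ((g t x - cD) / (αf x * β)) ((g t x + cD) / (αf x * β))} ∧
    Convex ℝ {z : Lp ℝ 1 (volume.restrict Ω) |
        ∀ w : Lp ℝ 1 (volume.restrict Ω),
          I1 Ω αf β g γ t z ≤ I1 Ω αf β g γ t w + ENNReal.ofReal (cD * ‖w - z‖)} ∧
    IsClosed {z : Lp ℝ 1 (volume.restrict Ω) |
        ∀ w : Lp ℝ 1 (volume.restrict Ω),
          I1 Ω αf β g γ t z ≤ I1 Ω αf β g γ t w + ENNReal.ofReal (cD * ‖w - z‖)} ∧
    (∀ (u : ℕ → Lp ℝ 1 (volume.restrict Ω)) (z : Lp ℝ 1 (volume.restrict Ω)),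
      (∀ n, ∀ w : Lp ℝ 1 (volume.restrict Ω),
        I1 Ω αf β g γ t (u n) ≤ I1 Ω αf β g γ t w + ENNReal.ofReal (cD * ‖w - u n‖)) →
      WeakConv u z →
      ∀ w : Lp ℝ 1 (volume.restrict Ω),
        I1 Ω αf β g γ t z ≤ I1 Ω αf β g γ t w + ENNReal.ofReal (cD * ‖w - z‖)) := by
  have hα : ∀ᵐ x ∂volume.restrict Ω, 0 < αf x :=
    (ae_restrict_mem hΩmeas).mono fun x hx => hα0.trans_le (hαlb x hx)
  exact I1_stable_set_characterization_general hαmeas.aemeasurable hα (Lp.memLp (g t)) hβ hcD.le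
    (hnonneg t ht)
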